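/- arXiv:1803.03413 — 2 statements merged into one kernel-verified Lean document; each statement's English description precedes it below -/
import Mathlib

section
/- Let γ ∈ (0,1), let a < t be real numbers, and let v : ℝ → ℝ be continuously differentiable on [a,t]. Extend v to the left of a by the constant value v(a), i.e. set ṽ(s) = v(max(s,a)). Then the Caputo fractional derivative equals the Marchaud-type extended derivative: (1/Γ(1−γ)) ∫_a^t (t−s)^{−γ} v′(s) ds = (γ/Γ(1−γ)) ∫_{−∞}^t (v(t) − ṽ(s)) (t−s)^{−1−γ} ds; in particular the integral on the right converges. -/
open MeasureTheory

/-- Caputo derivative equals the Marchaud-type extended derivative for a `C¹`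
function extended to the left of `a` by its value `v a`. -/
theorem stmt_0 (γ a t : ℝ) (hγ : γ ∈ Set.Ioo (0:ℝ) 1) (hat : a < t)
    (v v' : ℝ → ℝ)
    (hderiv : ∀ s ∈ Set.Icc a t, HasDerivWithinAt v (v' s) (Set.Icc a t) s)
    (hcont : ContinuousOn v' (Set.Icc a t)) :
    IntegrableOn (fun s => (v t - v (max s a)) * (t - s) ^ (-1 - γ)) (Set.Iio t) ∧
    (1 / Real.Gamma (1 - γ)) * ∫ s in a..t, (t - s) ^ (-γ) * v' s
      = (γ / Real.Gamma (1 - γ)) *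
          ∫ s in Set.Iio t, (v t - v (max s a)) * (t - s) ^ (-1 - γ) := by
  obtain ⟨hγ0, hγ1⟩ := hγ
  have htmem : t ∈ Set.Icc a t := ⟨hat.le, le_rfl⟩
  have hvc : ContinuousOn v (Set.Icc a t) := fun s hs => (hderiv s hs).continuousWithinAt
  obtain ⟨M, hM⟩ := isCompact_Icc.exists_bound_of_continuousOn hcont
  have hM0 : 0 ≤ M := (norm_nonneg _).trans (hM t htmem)
  have hlip : ∀ s ∈ Set.Icc a t, |v t - v s| ≤ M * (t - s) := by
    intro s hs
    have := (convex_Icc a t).norm_image_sub_le_of_norm_hasDerivWithin_le hderiv hM hs htmem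
    simpa [Real.norm_eq_abs, abs_of_nonneg (sub_nonneg.2 hs.2)] using this
  -- tail
  have hpre : (fun s => t - s) ⁻¹' Set.Ioi (t - a) = Set.Iio a := by
    ext s; simp
  have hmp := Measure.measurePreserving_sub_left (volume : Measure ℝ) t
  have hemb := (MeasurableEquiv.subLeft t).measurableEmbedding
  have htail_int : IntegrableOn (fun s => (t - s) ^ (-1 - γ)) (Set.Iio a) := by
    have h := integrableOn_Ioi_rpow_of_lt (a := -1 - γ) (by linarith) (sub_pos.2 hat)
    have := (hmp.integrableOn_comp_preimage hemb).2 h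
    rwa [hpre] at this
  have htail_val : ∫ s in Set.Iio a, (t - s) ^ (-1 - γ) = (t - a) ^ (-γ) / γ := by
    have h := integral_Ioi_rpow_of_lt (a := -1 - γ) (by linarith) (sub_pos.2 hat)
    have h2 := hmp.setIntegral_preimage_emb hemb (fun x => x ^ (-1 - γ)) (Set.Ioi (t - a))
    rw [hpre] at h2
    rw [h2, h]
    rw [show -1 - γ + 1 = -γ by ring, neg_div_neg_eq]
  -- local pieces
  have hker : IntervalIntegrable (fun s => (t - s) ^ (-γ)) volume a t := by
    have h := intervalIntegral.intervalIntegrable_rpow' (a := t - a) (b := 0) (r := -γ)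
      (by linarith)
    simpa using h.comp_sub_left t
  have hI1 : IntervalIntegrable (fun s => (t - s) ^ (-γ) * v' s) volume a t :=
    hker.mul_continuousOn (by rwa [Set.uIcc_of_le hat.le])
  have hpow : ∀ p : ℝ, ContinuousOn (fun s => (t - s) ^ p) (Set.Ioo a t) := by
    intro p
    refine ContinuousOn.rpow_const (by fun_prop) ?_
    intro s hs; left; have := hs.2; exact (sub_pos.2 this).ne'
  have hI2on : IntegrableOn (fun s => (v t - v s) * (t - s) ^ (-1 - γ)) (Set.Ioo a t) := by
    have hk : IntegrableOn (fun s => M * (t - s) ^ (-γ)) (Set.Ioo a t) :=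
      (((intervalIntegrable_iff_integrableOn_Ioo_of_le hat.le).1 hker).const_mul M)
    refine Integrable.mono' hk ?_ ?_
    · refine ContinuousOn.aestronglyMeasurable ?_ measurableSet_Ioo
      exact (continuousOn_const.sub (hvc.mono Set.Ioo_subset_Icc_self)).mul (hpow _)
    · refine (ae_restrict_mem measurableSet_Ioo).mono ?_
      intro s hs
      have hts : 0 < t - s := sub_pos.2 hs.2
      rw [norm_mul, Real.norm_eq_abs, Real.norm_eq_abs,
        abs_of_nonneg (Real.rpow_nonneg hts.le _)]
      calc _ ≤ M * (t - s) * (t - s) ^ (-1 - γ) := by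
            gcongr; exact hlip s (Set.Ioo_subset_Icc_self hs)
        _ = _ := by
            rw [mul_assoc]; congr 1
            nth_rewrite 1 [← Real.rpow_one (t - s)]
            rw [← Real.rpow_add hts]; congr 1; ring
  have hI2 : IntervalIntegrable (fun s => (v t - v s) * (t - s) ^ (-1 - γ)) volume a t :=
    (intervalIntegrable_iff_integrableOn_Ioo_of_le hat.le).2 hI2on
  -- FTC
  have hFc : ContinuousOn (fun s => (v t - v s) * (t - s) ^ (-γ)) (Set.Icc a t) := by
    intro s hs
    rcases hs.2.lt_or_eq with h | h
    · refine ((continuousOn_const.sub hvc) s hs).mul ?_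
      refine ContinuousWithinAt.rpow_const (by fun_prop) (Or.inl (sub_pos.2 h).ne')
    · subst h
      have hz : Filter.Tendsto (fun x => M * (s - x) ^ (1 - γ)) (nhdsWithin s (Set.Icc a s))
          (nhds 0) := by
        have : ContinuousAt (fun x => M * (s - x) ^ (1 - γ)) s := by
          refine continuousAt_const.mul ?_
          exact ContinuousAt.rpow_const (by fun_prop) (Or.inr (by linarith))
        have h2 := this.tendsto
        simp only [sub_self, Real.zero_rpow (by linarith : (1 - γ) ≠ 0), mul_zero] at h2
        exact h2.mono_left nhdsWithin_le_nhds
      unfold ContinuousWithinAt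
      simp only [sub_self, zero_mul]
      refine squeeze_zero_norm' ?_ hz
      refine Filter.eventually_of_mem self_mem_nhdsWithin ?_
      intro x hx
      rcases hx.2.lt_or_eq with h | h
      · have hts : 0 < s - x := sub_pos.2 h
        rw [norm_mul, Real.norm_eq_abs, Real.norm_eq_abs,
          abs_of_nonneg (Real.rpow_nonneg hts.le _)]
        calc _ ≤ M * (s - x) * (s - x) ^ (-γ) := by
              gcongr; exact hlip x hx
          _ = _ := by
              rw [mul_assoc]; congr 1
              nth_rewrite 1 [← Real.rpow_one (s - x)]
              rw [← Real.rpow_add hts]; congr 1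
      · subst h
        simp [Real.zero_rpow (by linarith : (1 - γ) ≠ 0)]
  have hFd : ∀ s ∈ Set.Ioo a t, HasDerivAt (fun s => (v t - v s) * (t - s) ^ (-γ))
      (γ * ((v t - v s) * (t - s) ^ (-1 - γ)) - (t - s) ^ (-γ) * v' s) s := by
    intro s hs
    have hts : 0 < t - s := sub_pos.2 hs.2
    have h1 : HasDerivAt v (v' s) s :=
      (hderiv s (Set.Ioo_subset_Icc_self hs)).hasDerivAt (Icc_mem_nhds hs.1 hs.2)
    have h2 : HasDerivAt (fun s => t - s) (-1) s := by
      simpa using (hasDerivAt_id s).const_sub t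
    have h3 := h2.rpow_const (p := -γ) (Or.inl hts.ne')
    refine ((h1.const_sub (v t)).mul h3).congr_deriv ?_
    rw [show -γ - 1 = -1 - γ by ring]; ring
  have hFTC := intervalIntegral.integral_eq_sub_of_hasDerivAt_of_le hat.le hFc hFd
    ((hI2.const_mul γ).sub hI1)
  rw [intervalIntegral.integral_sub (hI2.const_mul γ) hI1,
    intervalIntegral.integral_const_mul] at hFTC
  simp only [sub_self, zero_mul, zero_sub] at hFTC
  -- splitting
  have hsplit : Set.Iio t = Set.Iio a ∪ Set.Ico a t := (Set.Iio_union_Ico_eq_Iio hat.le).symm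
  have e1 : Set.EqOn (fun s => (v t - v a) * (t - s) ^ (-1 - γ))
      (fun s => (v t - v (max s a)) * (t - s) ^ (-1 - γ)) (Set.Iio a) := by
    intro s hs
    simp only [max_eq_right (le_of_lt (show s < a from hs))]
  have e2 : Set.EqOn (fun s => (v t - v s) * (t - s) ^ (-1 - γ))
      (fun s => (v t - v (max s a)) * (t - s) ^ (-1 - γ)) (Set.Ico a t) := by
    intro s hs
    simp only [max_eq_left hs.1]
  have j1 : IntegrableOn (fun s => (v t - v (max s a)) * (t - s) ^ (-1 - γ)) (Set.Iio a) :=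
    IntegrableOn.congr_fun (htail_int.const_mul (v t - v a)) e1 measurableSet_Iio
  have j2 : IntegrableOn (fun s => (v t - v (max s a)) * (t - s) ^ (-1 - γ)) (Set.Ico a t) :=
    IntegrableOn.congr_fun ((integrableOn_Ico_iff_integrableOn_Ioo (by finiteness)).2 hI2on) e2 measurableSet_Ico
  refine ⟨by rw [hsplit]; exact j1.union j2, ?_⟩
  have hdisj : Disjoint (Set.Iio a) (Set.Ico a t) :=
    Set.disjoint_left.2 fun s h1 h2 => absurd h2.1 (not_le.2 h1)
  rw [hsplit, setIntegral_union hdisj measurableSet_Ico j1 j2,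
    ← setIntegral_congr_fun measurableSet_Iio e1, ← setIntegral_congr_fun measurableSet_Ico e2,
    integral_const_mul, htail_val, integral_Ico_eq_integral_Ioo, ← integral_Ioc_eq_integral_Ioo,
    ← intervalIntegral.integral_of_le hat.le]
  have key : ∫ s in a..t, (t - s) ^ (-γ) * v' s =
      γ * ((v t - v a) * ((t - a) ^ (-γ) / γ) +
        ∫ s in a..t, (v t - v s) * (t - s) ^ (-1 - γ)) := by
    have : γ * ((v t - v a) * ((t - a) ^ (-γ) / γ)) = (v t - v a) * (t - a) ^ (-γ) := by
      field_simp
    rw [mul_add, this]; linarith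
  rw [key]; ring
end

section
/- Let γ ∈ (0,1), M > 0 and T ∈ ℝ, and let η : ℝ → ℝ be continuously differentiable with compact support, satisfying η(t) = 0 for all t ≤ −M. Define the Marchaud derivative D^γη(t) = γ ∫_{−∞}^t (η(t) − η(s)) (t−s)^{−1−γ} ds and the antiderivative (Iη)(t) = ∫_{−∞}^t η(τ) dτ. Then for every t ≤ T, the antiderivative of the fractional derivative equals the fractional derivative of the antiderivative: ∫_{−∞}^t D^γη(τ) dτ = γ ∫_{−∞}^t ((Iη)(t) − (Iη)(s)) (t−s)^{−1−γ} ds, both sides being finite. -/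
open MeasureTheory

lemma aux_cov (t : ℝ) (f : ℝ → ℝ) :
    ∫ s in Set.Iio t, f s = ∫ h in Set.Ioi (0:ℝ), f (t - h) := by
  have h1 := (Measure.measurePreserving_sub_left (volume : Measure ℝ) t).setIntegral_preimage_emb
    (MeasurableEquiv.subLeft t).measurableEmbedding f (Set.Iio t)
  rw [← h1]
  congr 2
  ext x; simp

lemma aux_cov_int (t : ℝ) (f : ℝ → ℝ) :
    IntegrableOn f (Set.Iio t) ↔ IntegrableOn (fun h => f (t - h)) (Set.Ioi (0:ℝ)) := by
  have h1 := (Measure.measurePreserving_sub_left (volume : Measure ℝ) t).integrableOn_comp_preimage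
    (MeasurableEquiv.subLeft t).measurableEmbedding (f := f) (s := Set.Iio t)
  rw [← h1]
  have : (fun x => t - x) ⁻¹' Set.Iio t = Set.Ioi 0 := by ext x; simp
  rw [this]; rfl

lemma aux_bound (η : ℝ → ℝ) (hη : ContDiff ℝ 1 η) (hsupp : HasCompactSupport η) :
    ∃ C : ℝ, ∀ h ∈ Set.Ioc (0:ℝ) 1, ∫ τ, |η τ - η (τ - h)| ≤ C * h := by
  obtain ⟨L, hL⟩ := hη.lipschitzWith_of_hasCompactSupport hsupp one_ne_zero
  obtain ⟨R, hR⟩ := hsupp.isCompact.isBounded.subset_closedBall (0:ℝ)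
  have hz : ∀ x, R < |x| → η x = 0 := by
    intro x hx
    by_contra hne
    have := hR (subset_tsupport η hne)
    simp at this
    linarith
  refine ⟨L * volume.real (Set.Icc (-(R+1)) (R+1)), fun h hh => ?_⟩
  obtain ⟨h0, h1⟩ := hh
  have hb : ∀ τ, |η τ - η (τ - h)| ≤
      (Set.Icc (-(R+1)) (R+1)).indicator (fun _ => (L:ℝ) * h) τ := by
    intro τ
    by_cases hτ : τ ∈ Set.Icc (-(R+1)) (R+1)
    · rw [Set.indicator_of_mem hτ]
      have := hL.dist_le_mul τ (τ - h)
      simpa [Real.dist_eq, abs_of_pos h0] using this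
    · rw [Set.indicator_of_notMem hτ]
      have hc : R + 1 < |τ| := by
        by_contra hcon
        exact hτ (abs_le.mp (not_lt.mp hcon))
      have h2 : R < |τ - h| := by
        have := abs_sub_abs_le_abs_sub τ h
        rw [abs_of_pos h0] at this
        linarith
      rw [hz τ (by linarith), hz _ h2]; simp
  have hint : Integrable ((Set.Icc (-(R+1)) (R+1)).indicator (fun _ => (L:ℝ) * h)) :=
    (integrable_indicator_iff measurableSet_Icc).2 (integrableOn_const (by simp))
  calc ∫ τ, |η τ - η (τ - h)| ≤ ∫ τ, (Set.Icc (-(R+1)) (R+1)).indicator (fun _ => (L:ℝ) * h) τ :=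
        integral_mono_of_nonneg (Filter.Eventually.of_forall fun _ => abs_nonneg _) hint
          (Filter.Eventually.of_forall hb)
    _ = _ := by
        rw [integral_indicator measurableSet_Icc, setIntegral_const, smul_eq_mul]; ring

lemma aux_int (γ : ℝ) (hγ : γ ∈ Set.Ioo (0:ℝ) 1)
    (η : ℝ → ℝ) (hη : ContDiff ℝ 1 η) (hsupp : HasCompactSupport η) :
    Integrable (fun p : ℝ × ℝ => (η p.1 - η (p.1 - p.2)) * p.2 ^ (-1 - γ))
      ((volume : Measure ℝ).prod (volume.restrict (Set.Ioi (0:ℝ)))) := by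
  have hc := hη.continuous
  have hi : Integrable η := hc.integrable_of_hasCompactSupport hsupp
  have hmeas : Measurable (fun p : ℝ × ℝ => (η p.1 - η (p.1 - p.2)) * p.2 ^ (-1 - γ)) := by
    have := hc.measurable
    fun_prop
  rw [integrable_prod_iff' hmeas.aestronglyMeasurable]
  refine ⟨Filter.Eventually.of_forall fun h =>
    (hi.sub (hi.comp_sub_right h)).mul_const (h ^ (-1 - γ)), ?_⟩
  have hm2 : StronglyMeasurable
      (fun h : ℝ => ∫ τ, ‖(η τ - η (τ - h)) * h ^ (-1 - γ)‖) := 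
    (hmeas.norm.stronglyMeasurable).integral_prod_left'
  have hnorm : ∀ h : ℝ, 0 < h → ∫ τ, ‖(η τ - η (τ - h)) * h ^ (-1 - γ)‖
      = (∫ τ, |η τ - η (τ - h)|) * h ^ (-1 - γ) := by
    intro h h0
    rw [← integral_mul_const]
    congr 1; ext τ
    rw [norm_mul, Real.norm_eq_abs, Real.norm_eq_abs, abs_of_pos (Real.rpow_pos_of_pos h0 _)]
  obtain ⟨C, hC⟩ := aux_bound η hη hsupp
  change IntegrableOn (fun h : ℝ => ∫ τ, ‖(η τ - η (τ - h)) * h ^ (-1 - γ)‖) (Set.Ioi 0)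
  rw [← Set.Ioc_union_Ioi_eq_Ioi (zero_le_one' ℝ)]
  refine IntegrableOn.union ?_ ?_
  · have hg : IntegrableOn (fun h : ℝ => C * h ^ (-γ)) (Set.Ioc 0 1) := by
      have := (intervalIntegral.intervalIntegrable_rpow' (a := 0) (b := 1) (r := -γ)
        (by linarith [hγ.2]))
      rw [intervalIntegrable_iff_integrableOn_Ioc_of_le zero_le_one] at this
      exact this.const_mul C
    refine Integrable.mono' hg hm2.aestronglyMeasurable ?_
    refine (ae_restrict_iff' measurableSet_Ioc).2 (Filter.Eventually.of_forall fun h hh => ?_)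
    rw [Real.norm_of_nonneg (integral_nonneg fun _ => norm_nonneg _), hnorm h hh.1]
    calc _ ≤ (C * h) * h ^ (-1 - γ) :=
          mul_le_mul_of_nonneg_right (hC h hh) (Real.rpow_nonneg hh.1.le _)
      _ = C * h ^ (-γ) := by
          rw [mul_assoc]; congr 1
          rw [← Real.rpow_one_add' hh.1.le (by linarith [hγ.1] )]
          · congr 1; ring
  · have hg : IntegrableOn (fun h : ℝ => (2 * ∫ τ, |η τ|) * h ^ (-1 - γ)) (Set.Ioi 1) :=
      (integrableOn_Ioi_rpow_of_lt (by linarith [hγ.1]) one_pos).const_mul _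
    refine Integrable.mono' hg hm2.aestronglyMeasurable ?_
    refine (ae_restrict_iff' measurableSet_Ioi).2 (Filter.Eventually.of_forall fun h hh => ?_)
    have h0 : (0:ℝ) < h := lt_trans one_pos hh
    rw [Real.norm_of_nonneg (integral_nonneg fun _ => norm_nonneg _), hnorm h h0]
    refine mul_le_mul_of_nonneg_right ?_ (Real.rpow_nonneg h0.le _)
    calc ∫ τ, |η τ - η (τ - h)| ≤ ∫ τ, (|η τ| + |η (τ - h)|) :=
          integral_mono (hi.sub (hi.comp_sub_right h)).abs
            (hi.abs.add (hi.comp_sub_right h).abs) (fun τ => abs_sub _ _)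
      _ = 2 * ∫ τ, |η τ| := by
          rw [integral_add hi.abs (hi.comp_sub_right h).abs,
            integral_sub_right_eq_self (fun x => |η x|) h]; ring

/-- The switch lemma: integration from `-∞` commutes with the Marchaud
fractional derivative on smooth compactly supported functions vanishing in the
distant past. -/
theorem stmt_1 (γ M T : ℝ) (hγ : γ ∈ Set.Ioo (0:ℝ) 1) (hM : 0 < M)
    (η : ℝ → ℝ) (hη : ContDiff ℝ 1 η) (hsupp : HasCompactSupport η)
    (hzero : ∀ t ≤ -M, η t = 0) :
    ∀ t ≤ T,
      IntegrableOn (fun τ => γ * ∫ s in Set.Iio τ, (η τ - η s) * (τ - s) ^ (-1 - γ))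
        (Set.Iio t) ∧
      IntegrableOn
        (fun s => ((∫ τ in Set.Iio t, η τ) - ∫ τ in Set.Iio s, η τ) * (t - s) ^ (-1 - γ))
        (Set.Iio t) ∧
      (∫ τ in Set.Iio t, γ * ∫ s in Set.Iio τ, (η τ - η s) * (τ - s) ^ (-1 - γ))
        = γ * ∫ s in Set.Iio t,
            ((∫ τ in Set.Iio t, η τ) - ∫ τ in Set.Iio s, η τ) * (t - s) ^ (-1 - γ) := by
  intro t _
  have hi : Integrable η := hη.continuous.integrable_of_hasCompactSupport hsupp
  have hF : Integrable (fun p : ℝ × ℝ => (η p.1 - η (p.1 - p.2)) * p.2 ^ (-1 - γ))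
      ((volume.restrict (Set.Iio t)).prod (volume.restrict (Set.Ioi (0:ℝ)))) :=
    (aux_int γ hγ η hη hsupp).mono_measure
      (Measure.prod_mono Measure.restrict_le_self le_rfl)
  have e1 : ∀ τ : ℝ, ∫ s in Set.Iio τ, (η τ - η s) * (τ - s) ^ (-1 - γ)
      = ∫ h in Set.Ioi (0:ℝ), (η τ - η (τ - h)) * h ^ (-1 - γ) := by
    intro τ
    rw [aux_cov]
    simp only [sub_sub_cancel]
  have e2 : ∀ h : ℝ, ((∫ τ in Set.Iio t, η τ) - ∫ τ in Set.Iio (t - h), η τ) * h ^ (-1 - γ)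
      = ∫ τ in Set.Iio t, (η τ - η (τ - h)) * h ^ (-1 - γ) := by
    intro h
    rw [integral_mul_const, integral_sub hi.integrableOn (hi.comp_sub_right h).integrableOn]
    congr 2
    rw [aux_cov, aux_cov t]
    congr 1; ext x; congr 1; ring
  simp only [e1]
  refine ⟨hF.integral_prod_left.const_mul γ, ?_, ?_⟩
  · rw [aux_cov_int]
    simp only [sub_sub_cancel, e2]
    exact hF.integral_prod_right
  · rw [aux_cov t (fun s => ((∫ τ in Set.Iio t, η τ) - ∫ τ in Set.Iio s, η τ) * (t - s) ^ (-1 - γ))]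
    simp only [sub_sub_cancel, e2]
    rw [integral_const_mul]
    congr 1
    exact integral_integral_swap hF
end
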